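/- If N is an integer with N ≥ [r], then the space 𝓕^N(𝒪_F,J,(d_σ)_{σ∈S∖J}) is dense in C^r(𝒪_F,J',(d_σ)_{σ∈S∖J'}). -/

import Mathlib

/-!
Setting (cf. the paper's notations): `O` plays the role of the ring of integers `𝒪_F` of a
finite extension `F` of `ℚ_p`, `E` is the coefficient field (a finite extension of `ℚ_p`
with its p-adic absolute value, normalized by `|x| = p^{-val_F(x)}`, `val_F(p) = [F:ℚ_p]`),
`S` is the (finite) set of `ℚ_p`-algebra embeddings `F ↪ E`, restricted here to `O`,
`ν : O → ℝ` is the absolute value on `O` (the common restriction of the norm of `E` along any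
embedding), `ϖ` is a fixed uniformizer with `ν ϖ = q⁻¹` where `q = p^f` is the cardinality
of the residue field, and `u * ϖ ^ e = p` records the ramification index `e`.
-/

open scoped Classical

noncomputable section

namespace CrPaper

structure Setting (S O E : Type*) [Fintype S] [CommRing O] [NormedField E] where
  q : ℝ
  p : ℕ
  fdeg : ℕ
  hp : p.Prime
  hfdeg : 0 < fdeg
  hq : q = (p : ℝ) ^ fdeg
  emb : S → O →+* E
  emb_inj : ∀ s, Function.Injective (emb s)
  emb_distinct : Function.Injective emb
  ν : O → ℝ
  norm_emb : ∀ (s) (z : O), ‖emb s z‖ = ν z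
  norm_le_one : ∀ (s) (z : O), ‖emb s z‖ ≤ 1
  norm_add_max : ∀ x y : E, ‖x + y‖ ≤ max ‖x‖ ‖y‖
  ϖ : O
  ν_ϖ : ν ϖ = q⁻¹
  mem_ball_iff : ∀ (y : O) (n : ℕ), (∃ z, y = ϖ ^ n * z) ↔ ν y ≤ q⁻¹ ^ n
  ram : ∃ (e : ℕ) (u : O), 0 < e ∧ IsUnit u ∧ u * ϖ ^ e = (p : O)

variable {S O E : Type*} [Fintype S] [DecidableEq S] [CommRing O] [IsDomain O]
  [NormedField E] [CompleteSpace E] [CharZero E]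

/-- The total weight `|i| = ∑ i_σ` of a multi-index. -/
def wt (i : S → ℕ) : ℕ := ∑ s, i s

/-- `i! = ∏ i_σ!` for a multi-index. -/
def mfact (i : S → ℕ) : ℕ := ∏ s, (i s).factorial

/-- The (finite) set `I_{≤N}` of multi-indices of total weight `≤ N`. -/
def Idx (S : Type*) [Fintype S] [DecidableEq S] (N : ℕ) : Finset (S → ℕ) :=
  (Fintype.piFinset fun _ : S => Finset.range (N + 1)).filter fun i => wt i ≤ N

/-- `z^i = ∏_σ σ(z)^{i_σ}`. -/
def mpow (St : Setting S O E) (z : O) (i : S → ℕ) : E := ∏ s, St.emb s z ^ i s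

/-- The Taylor remainder `ε_{f,N}(x,y) = f(x+y) − ∑_{|i|≤N} D_i f(x) y^i / i!`. -/
def epsTay (St : Setting S O E) (N : ℕ) (f : O → E) (D : (S → ℕ) → O → E) (x y : O) : E :=
  f (x + y) - ∑ i ∈ Idx S N, D i x * mpow St y i / (mfact i : E)

/-- `f` is of class `C^r` with the family of bounded functions `D` witnessing the
definition: all `D_i` (`|i| ≤ ⌊r⌋`) are bounded and
`C_{f,r}(h) = sup_{x ∈ O, y ∈ ϖ^h O} |ε_{f,⌊r⌋}(x,y)| q^{rh} → 0` as `h → ∞`. -/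
def IsCrWith (St : Setting S O E) (r : ℝ) (f : O → E) (D : (S → ℕ) → O → E) : Prop :=
  (∀ i ∈ Idx S ⌊r⌋₊, ∃ C : ℝ, ∀ x : O, ‖D i x‖ ≤ C) ∧
  ∀ ε : ℝ, 0 < ε → ∃ M : ℕ, ∀ h : ℕ, M ≤ h → ∀ x z : O,
    ‖epsTay St ⌊r⌋₊ f D x (St.ϖ ^ h * z)‖ * St.q ^ (r * (h : ℝ)) ≤ ε

/-- `f` is of class `C^r`. -/
def IsCr (St : Setting S O E) (r : ℝ) (f : O → E) : Prop :=
  ∃ D, IsCrWith St r f D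

/-- The `C^r`-norm of `f` (relative to the — unique — family `D`):
`max( sup_{i,x} |D_i f(x)/i!| , sup_{x,y} |ε_{f,⌊r⌋}(x,y)|/|y|^r )`. -/
def CrNorm (St : Setting S O E) (r : ℝ) (f : O → E) (D : (S → ℕ) → O → E) : ℝ :=
  max (⨆ i : (Idx S ⌊r⌋₊), ⨆ x : O, ‖D i.1 x / (mfact i.1 : E)‖)
      (⨆ x : O, ⨆ y : O, ‖epsTay St ⌊r⌋₊ f D x y‖ / St.ν y ^ r)

/-- `J' = J ∪ {σ ∈ S∖J : d_σ + 1 > r}`. -/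
def Jp (J : Set S) (d : S → ℕ) (r : ℝ) : Set S := J ∪ {s | r < (d s : ℝ) + 1}

/-- `𝓕^N(O, J, (d_σ)_{σ∈S∖J})`: locally `ℚ_p`-polynomial functions of total degree `≤ N`
which are of degree `≤ d_σ` in `σ(z)` for every `σ ∈ S∖J`. -/
def FNJ (St : Setting S O E) (N : ℕ) (J : Set S) (d : S → ℕ) : Set (O → E) :=
  {g | ∃ h : ℕ, ∀ a : O, ∃ c : (S → ℕ) → E, ∀ y : O,
      g (a + St.ϖ ^ h * y) =
        ∑ i ∈ (Idx S N).filter (fun i => ∀ s ∉ J, i s ≤ d s),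
          c i * mpow St (St.ϖ ^ h * y) i}

lemma mem_Idx {N : ℕ} {i : S → ℕ} : i ∈ Idx S N ↔ wt i ≤ N := by
  unfold Idx
  simp only [Finset.mem_filter, Fintype.mem_piFinset, Finset.mem_range, and_iff_right_iff_imp]
  intro h s
  have : i s ≤ wt i := Finset.single_le_sum (f := i) (fun _ _ => Nat.zero_le _) (Finset.mem_univ s)
  omega

lemma mfact_ne (i : S → ℕ) : (mfact i : E) ≠ 0 :=
  Nat.cast_ne_zero.2 (Finset.prod_ne_zero_iff.2 fun s _ => Nat.factorial_ne_zero _)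

lemma wt_mono {i j : S → ℕ} (h : j ≤ i) : wt j ≤ wt i :=
  Finset.sum_le_sum fun s _ => h s

lemma mpow_mul (St : Setting S O E) (y z : O) (i : S → ℕ) :
    mpow St (y * z) i = mpow St y i * mpow St z i := by
  simp [mpow, mul_pow, Finset.prod_mul_distrib]

lemma mpow_add_idx (St : Setting S O E) (y : O) (i j : S → ℕ) :
    mpow St y (i + j) = mpow St y i * mpow St y j := by
  simp [mpow, pow_add, Finset.prod_mul_distrib]

lemma norm_mpow (St : Setting S O E) (y : O) (i : S → ℕ) :
    ‖mpow St y i‖ = St.ν y ^ wt i := by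
  simp [mpow, wt, norm_prod, norm_pow, St.norm_emb, Finset.prod_pow_eq_pow_sum]

lemma norm_mpow_le_one (St : Setting S O E) (y : O) (i : S → ℕ) :
    ‖mpow St y i‖ ≤ 1 := by
  rw [mpow, norm_prod]
  refine Finset.prod_le_one (fun _ _ => norm_nonneg _) fun s _ => ?_
  rw [norm_pow]
  exact pow_le_one₀ (norm_nonneg _) (St.norm_le_one s y)

lemma norm_mpow_pi (St : Setting S O E) (h : ℕ) (i : S → ℕ) :
    ‖mpow St (St.ϖ ^ h) i‖ = (St.q⁻¹ ^ h) ^ wt i := by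
  simp [mpow, wt, norm_prod, norm_pow, St.norm_emb, St.ν_ϖ, Finset.prod_pow_eq_pow_sum]

lemma one_lt_q (St : Setting S O E) : 1 < St.q := by
  rw [St.hq]
  exact one_lt_pow₀ (by exact_mod_cast St.hp.one_lt) (Nat.pos_iff_ne_zero.1 St.hfdeg)

/-- product of binomial coefficients -/
def Bin (i j : S → ℕ) : ℕ := ∏ s, (i s).choose (j s)

lemma Bin_eq_zero {i j : S → ℕ} (h : ¬ j ≤ i) : Bin i j = 0 := by
  rw [Pi.le_def] at h
  push Not at h
  obtain ⟨s, hs⟩ := h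
  exact Finset.prod_eq_zero (Finset.mem_univ s) (Nat.choose_eq_zero_of_lt hs)

lemma Bin_ne_zero {i j : S → ℕ} (h : j ≤ i) : Bin i j ≠ 0 :=
  Finset.prod_ne_zero_iff.2 fun s _ => (Nat.choose_pos (h s)).ne'

lemma Bin_self (i : S → ℕ) : Bin i i = 1 := by simp [Bin]

lemma mpow_add (St : Setting S O E) {N : ℕ} (y w : O) (i : S → ℕ) (hi : i ∈ Idx S N) :
    mpow St (y + w) i = ∑ j ∈ Idx S N, (Bin i j : E) * mpow St y (i - j) * mpow St w j := by
  have h1 : mpow St (y + w) i = ∑ j ∈ Fintype.piFinset (fun s => Finset.range (i s + 1)),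
      (Bin i j : E) * mpow St y (i - j) * mpow St w j := by
    have : mpow St (y + w) i = ∏ s, ∑ k ∈ Finset.range (i s + 1),
        St.emb s w ^ k * St.emb s y ^ (i s - k) * ((i s).choose k : E) := by
      refine Finset.prod_congr rfl fun s _ => ?_
      rw [map_add, add_comm, add_pow]
    rw [this, Finset.prod_univ_sum]
    refine Finset.sum_congr rfl fun j _ => ?_
    simp only [Finset.prod_mul_distrib, Bin, mpow, Nat.cast_prod, Pi.sub_apply]
    ring
  rw [h1]
  refine Finset.sum_subset ?_ ?_
  · intro j hj
    rw [mem_Idx] at *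
    rw [Fintype.mem_piFinset] at hj
    exact (wt_mono fun s => Nat.lt_succ_iff.1 (Finset.mem_range.1 (hj s))).trans hi
  · intro j _ hj
    rw [Bin_eq_zero]
    · simp
    · intro hle
      exact hj (Fintype.mem_piFinset.2 fun s => Finset.mem_range.2 (Nat.lt_succ_iff.2 (hle s)))

/-- the monomial as a monoid homomorphism -/
def mpowHom (St : Setting S O E) (i : S → ℕ) : O →* E where
  toFun z := mpow St z i
  map_one' := by simp [mpow]
  map_mul' y z := mpow_mul St y z i

lemma coeff_aux (a : S → E) (i : S → ℕ) :
    (∏ s, (1 + Polynomial.C (a s) * Polynomial.X) ^ i s : Polynomial E).coeff 1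
      = ∑ s, (i s : E) * a s := by
  have hpow : ∀ (b : E) (n : ℕ),
      ((1 + Polynomial.C b * Polynomial.X) ^ n : Polynomial E).coeff 0 = 1 ∧
      ((1 + Polynomial.C b * Polynomial.X) ^ n : Polynomial E).coeff 1 = n * b := by
    intro b n
    induction n with
    | zero => simp [Polynomial.coeff_one]
    | succ n ih =>
      rw [pow_succ]
      constructor
      · simp [Polynomial.mul_coeff_zero, ih.1]
      · rw [Polynomial.mul_coeff_one, ih.1, ih.2]
        simp [Polynomial.coeff_one]
        ring
  have : ∀ t : Finset S,
      (∏ s ∈ t, (1 + Polynomial.C (a s) * Polynomial.X) ^ i s : Polynomial E).coeff 0 = 1 ∧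
      (∏ s ∈ t, (1 + Polynomial.C (a s) * Polynomial.X) ^ i s : Polynomial E).coeff 1
      = ∑ s ∈ t, (i s : E) * a s := by
    intro t
    induction t using Finset.induction_on with
    | empty => simp [Polynomial.coeff_one]
    | insert s t hs ih =>
      rw [Finset.prod_insert hs, Finset.sum_insert hs]
      constructor
      · rw [Polynomial.mul_coeff_zero, ih.1, (hpow _ _).1, one_mul]
      · rw [Polynomial.mul_coeff_one, ih.1, ih.2, (hpow _ _).1, (hpow _ _).2]
        ring
  exact (this _).2

lemma mpowHom_inj (St : Setting S O E) : Function.Injective (mpowHom St) := by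
  intro i j hij
  have key : ∀ w : O, ∑ s, (i s : E) * St.emb s w = ∑ s, (j s : E) * St.emb s w := by
    intro w
    rw [← coeff_aux (fun s => St.emb s w) i, ← coeff_aux (fun s => St.emb s w) j]
    congr 1
    refine Polynomial.eq_of_infinite_eval_eq _ _ ?_
    refine Set.Infinite.mono ?_ (Set.infinite_range_of_injective (Nat.cast_injective (R := E)))
    rintro _ ⟨n, rfl⟩
    have := DFunLike.congr_fun hij (1 + w * (n : O))
    simp only [Set.mem_ofPred_eq, Polynomial.eval_prod, Polynomial.eval_pow, Polynomial.eval_add,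
      Polynomial.eval_one, Polynomial.eval_mul, Polynomial.eval_C, Polynomial.eval_X]
    simpa [mpowHom, mpow] using this
  have hli : LinearIndependent E (fun s : S => ((St.emb s : O →* E) : O → E)) := by
    refine (linearIndependent_monoidHom O E).comp (fun s : S => (St.emb s : O →* E)) ?_
    intro s t hst
    apply St.emb_distinct
    ext z
    exact DFunLike.congr_fun hst z
  have h2 := Fintype.linearIndependent_iff.1 hli (fun s => (i s : E) - (j s : E)) (by
    funext w
    have := key w
    simp only [Finset.sum_apply, Pi.smul_apply, smul_eq_mul, Pi.zero_apply, sub_mul,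
      Finset.sum_sub_distrib]
    exact sub_eq_zero.2 this)
  funext s
  exact_mod_cast sub_eq_zero.1 (h2 s)

lemma exists_K (St : Setting S O E) (N : ℕ) : ∃ K : ℝ, 0 ≤ K ∧
    ∀ (c : (S → ℕ) → E) (b : ℝ),
      (∀ z : O, ‖∑ i ∈ Idx S N, c i * mpow St z i‖ ≤ b) → ∀ i ∈ Idx S N, ‖c i‖ ≤ K * b := by
  have hli : LinearIndependent E (fun i : Idx S N => (mpowHom St i.1 : O → E)) :=
    (linearIndependent_monoidHom O E).comp (fun i : Idx S N => mpowHom St i.1)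
      ((mpowHom_inj St).comp Subtype.val_injective)
  let row : O → (Idx S N → E) := fun z i => mpow St z i.1
  have hspan : Submodule.span E (Set.range row) = ⊤ := by
    by_contra hne
    obtain ⟨φ, hφ, hle⟩ := Submodule.exists_le_ker_of_lt_top _ (lt_top_iff_ne_top.2 hne)
    apply hφ
    have h0 := Fintype.linearIndependent_iff.1 hli (fun i => φ (Pi.single i 1)) (by
      funext z
      have hz : φ (row z) = 0 := hle (Submodule.subset_span ⟨z, rfl⟩)
      rw [pi_eq_sum_univ (row z), map_sum] at hz
      simp only [map_smul, smul_eq_mul] at hz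
      simp only [Finset.sum_apply, Pi.smul_apply, smul_eq_mul, Pi.zero_apply]
      rw [← hz]
      refine Finset.sum_congr rfl fun i _ => ?_
      rw [mul_comm]
      congr 2
      funext k
      simp [Pi.single_apply, eq_comm])
    refine LinearMap.pi_ext' fun i => LinearMap.ext_ring ?_
    simpa using h0 i
  have hex : ∀ i : Idx S N, ∃ l : O →₀ E, (l.sum fun z a => a • row z) = Pi.single i 1 := by
    intro i
    have : (Pi.single i 1 : Idx S N → E) ∈ Submodule.span E (Set.range row) := by
      rw [hspan]; trivial
    exact Finsupp.mem_span_range_iff_exists_finsupp.1 this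
  choose l hl using hex
  refine ⟨∑ i, ∑ z ∈ (l i).support, ‖l i z‖, by positivity, ?_⟩
  intro c b hb i hi
  have hb0 : 0 ≤ b := (norm_nonneg _).trans (hb 0)
  have hc : c i = ∑ z ∈ (l ⟨i, hi⟩).support,
      l ⟨i, hi⟩ z * ∑ k ∈ Idx S N, c k * mpow St z k := by
    have h1 : ∀ k : Idx S N, ∑ z ∈ (l ⟨i, hi⟩).support, l ⟨i, hi⟩ z * mpow St z k.1
        = (Pi.single (⟨i, hi⟩ : Idx S N) (1 : E) : Idx S N → E) k := by
      intro k
      rw [← hl, Finsupp.sum, Finset.sum_apply]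
      rfl
    simp_rw [Finset.mul_sum]
    rw [Finset.sum_comm, ← Finset.sum_coe_sort]
    have h2 : ∀ k : Idx S N, ∑ z ∈ (l ⟨i, hi⟩).support,
        l ⟨i, hi⟩ z * (c k.1 * mpow St z k.1) = c k.1 *
          (Pi.single (⟨i, hi⟩ : Idx S N) (1 : E) : Idx S N → E) k := by
      intro k
      rw [← h1, Finset.mul_sum]
      exact Finset.sum_congr rfl fun z _ => by ring
    rw [Finset.sum_congr rfl fun k _ => h2 k]
    simp [Pi.single_apply]
  rw [hc]
  calc _ ≤ ∑ z ∈ (l ⟨i, hi⟩).support, ‖l ⟨i, hi⟩ z‖ * b := by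
        refine norm_sum_le_of_le _ fun z _ => ?_
        rw [norm_mul]
        exact mul_le_mul_of_nonneg_left (hb z) (norm_nonneg _)
    _ = (∑ z ∈ (l ⟨i, hi⟩).support, ‖l ⟨i, hi⟩ z‖) * b := by rw [Finset.sum_mul]
    _ ≤ _ := by
        refine mul_le_mul_of_nonneg_right ?_ hb0
        exact Finset.single_le_sum (f := fun i : Idx S N => ∑ z ∈ (l i).support, ‖l i z‖)
          (fun _ _ => Finset.sum_nonneg fun _ _ => norm_nonneg _) (Finset.mem_univ _)

/-- derivative of the Taylor polynomial at `x`, evaluated at `x + y`, divided by `j!` -/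
def Tay (St : Setting S O E) (N : ℕ) (D : (S → ℕ) → O → E) (j : S → ℕ) (x y : O) : E :=
  ∑ i ∈ Idx S N, D i x / (mfact i : E) * ((Bin i j : E) * mpow St y (i - j))

lemma taylor_shift (St : Setting S O E) (N : ℕ) (D : (S → ℕ) → O → E) (x y w : O) :
    ∑ i ∈ Idx S N, D i x * mpow St (y + w) i / (mfact i : E)
      = ∑ j ∈ Idx S N, Tay St N D j x y * mpow St w j := by
  have : ∀ i ∈ Idx S N, D i x * mpow St (y + w) i / (mfact i : E) = ∑ j ∈ Idx S N,
      D i x / (mfact i : E) * ((Bin i j : E) * mpow St y (i - j)) * mpow St w j := by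
    intro i hi
    rw [mpow_add St y w i hi, mul_div_right_comm, Finset.mul_sum]
    exact Finset.sum_congr rfl fun j _ => by ring
  rw [Finset.sum_congr rfl this, Finset.sum_comm]
  refine Finset.sum_congr rfl fun j _ => ?_
  rw [Tay, Finset.sum_mul]

/-- remainder of the `j`-th derivative, divided by `j!` -/
def Rem (St : Setting S O E) (N : ℕ) (D : (S → ℕ) → O → E) (j : S → ℕ) (x y : O) : E :=
  D j (x + y) / (mfact j : E) - Tay St N D j x y

lemma eps_diff (St : Setting S O E) (N : ℕ) (f : O → E) (D : (S → ℕ) → O → E) (x y w : O) :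
    epsTay St N f D x (y + w) - epsTay St N f D (x + y) w
      = ∑ j ∈ Idx S N, Rem St N D j x y * mpow St w j := by
  rw [epsTay, epsTay, taylor_shift, ← add_assoc]
  simp only [Rem, sub_mul, Finset.sum_sub_distrib]
  have : ∀ i ∈ Idx S N, D i (x + y) * mpow St w i / (mfact i : E)
      = D i (x + y) / (mfact i : E) * mpow St w i := fun i _ => by ring
  rw [Finset.sum_congr rfl this]
  ring

lemma rem_bound (St : Setting S O E) (N : ℕ) (f : O → E) (D : (S → ℕ) → O → E) {K : ℝ}
    (hK : ∀ (c : (S → ℕ) → E) (b : ℝ),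
      (∀ z : O, ‖∑ i ∈ Idx S N, c i * mpow St z i‖ ≤ b) → ∀ i ∈ Idx S N, ‖c i‖ ≤ K * b)
    (h : ℕ) (b : ℝ) (hb : ∀ x z : O, ‖epsTay St N f D x (St.ϖ ^ h * z)‖ ≤ b)
    (x u : O) (j : S → ℕ) (hj : j ∈ Idx S N) :
    ‖Rem St N D j x (St.ϖ ^ h * u)‖ * (St.q⁻¹ ^ h) ^ wt j ≤ K * (2 * b) := by
  have := hK (fun j => Rem St N D j x (St.ϖ ^ h * u) * mpow St (St.ϖ ^ h) j) (2 * b) (by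
    intro z
    have e := eps_diff St N f D x (St.ϖ ^ h * u) (St.ϖ ^ h * z)
    simp only [mul_assoc, ← mpow_mul]
    rw [← e, ← mul_add]
    refine (norm_sub_le _ _).trans ?_
    linarith [hb x (u + z), hb (x + St.ϖ ^ h * u) z]) j hj
  rwa [norm_mul, norm_mpow_pi] at this

lemma q_conv (St : Setting S O E) {r : ℝ} {h : ℕ} {a b : ℝ}
    (hab : a * St.q ^ (r * (h : ℝ)) ≤ b) : a ≤ b * (St.q⁻¹ ^ h) ^ r := by
  have hq := zero_lt_one.trans (one_lt_q St)
  have : (St.q⁻¹ ^ h) ^ r = (St.q ^ (r * (h : ℝ)))⁻¹ := by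
    rw [inv_pow, Real.inv_rpow (by positivity), ← Real.rpow_natCast, ← Real.rpow_mul hq.le, mul_comm r]
  rw [this, ← div_eq_mul_inv, le_div_iff₀ (by positivity)]
  exact hab

lemma t_pos (St : Setting S O E) (h : ℕ) : 0 < St.q⁻¹ ^ h := by
  have hq := zero_lt_one.trans (one_lt_q St)
  positivity

lemma t_le_one (St : Setting S O E) (h : ℕ) : St.q⁻¹ ^ h ≤ 1 :=
  pow_le_one₀ (by have := one_lt_q St; positivity) (inv_le_one_of_one_le₀ (one_lt_q St).le)

lemma wt_le_r {r : ℝ} (hr : 0 ≤ r) {i : S → ℕ} (hi : i ∈ Idx S ⌊r⌋₊) : (wt i : ℝ) ≤ r :=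
  (Nat.cast_le.2 (mem_Idx.1 hi)).trans (Nat.floor_le hr)

lemma le_of_scaled {t r a b v : ℝ} {n : ℕ} (ht : 0 < t) (hn : (n : ℝ) ≤ r) (hb : 0 ≤ b)
    (hv : t ≤ v) (h : a * t ^ n ≤ b * t ^ r) : a * v ^ n ≤ b * v ^ r := by
  have hv0 := ht.trans_le hv
  have e : ∀ {u : ℝ}, 0 < u → u ^ r = u ^ (r - n) * u ^ n := by
    intro u hu
    rw [← Real.rpow_natCast u n, ← Real.rpow_add hu]; congr 1; ring
  rw [e ht, ← mul_assoc] at h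
  have h1 : a ≤ b * t ^ (r - n) := le_of_mul_le_mul_right h (by positivity)
  rw [e hv0, ← mul_assoc]
  refine mul_le_mul_of_nonneg_right (h1.trans ?_) (by positivity)
  exact mul_le_mul_of_nonneg_left (Real.rpow_le_rpow ht.le hv (by linarith)) hb

lemma vanish (St : Setting S O E) (r : ℝ) (hr : 0 ≤ r) (f : O → E) (D : (S → ℕ) → O → E)
    (hf : IsCrWith St r f D) (e : S → ℕ) (hDe : D e = 0) (i : S → ℕ)
    (hi : i ∈ Idx S ⌊r⌋₊) (hei : e ≤ i) (x : O) : D i x = 0 := by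
  obtain ⟨K, hK0, hK⟩ := exists_K St ⌊r⌋₊
  have he : e ∈ Idx S ⌊r⌋₊ := mem_Idx.2 ((wt_mono hei).trans (mem_Idx.1 hi))
  set c : (S → ℕ) → E := fun i => D i x / (mfact i : E) * (Bin i e : E) with hc
  have main : ∀ δ : ℝ, 0 < δ → ‖c i‖ ≤ (2 * K * K) * δ := by
    intro δ hδ
    obtain ⟨h, hM⟩ := hf.2 δ hδ
    have hb : ∀ x z, _ := fun x z => q_conv St (hM h le_rfl x z)
    have ht := t_pos St h
    set t := St.q⁻¹ ^ h with ht_def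
    have hR := fun u => rem_bound St ⌊r⌋₊ f D hK h _ hb x u e he
    have := hK (fun i => c i * mpow St (St.ϖ ^ h) i) (K * (2 * (δ * t ^ r))) (by
      intro z
      refine le_trans ?_ (hR z)
      rw [← ht_def]
      have e1 : ∑ i ∈ Idx S ⌊r⌋₊, c i * mpow St (St.ϖ ^ h) i * mpow St z i
          = - Rem St ⌊r⌋₊ D e x (St.ϖ ^ h * z) * mpow St (St.ϖ ^ h * z) e := by
        rw [Rem, hDe, Tay]
        simp only [Pi.zero_apply, zero_div, zero_sub, neg_neg, Finset.sum_mul]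
        refine Finset.sum_congr rfl fun k _ => ?_
        by_cases hk : e ≤ k
        · have := mpow_add_idx St (St.ϖ ^ h * z) (k - e) e
          rw [tsub_add_cancel_of_le hk] at this
          rw [mul_assoc, ← mpow_mul, this, hc]
          ring
        · simp [hc, Bin_eq_zero hk]
      rw [e1, mpow_mul, norm_mul, norm_mul, norm_neg, norm_mpow_pi, ← ht_def, ← mul_assoc]
      exact mul_le_of_le_one_right (by positivity) (norm_mpow_le_one St z e)) i hi
    rw [norm_mul, norm_mpow_pi, ← ht_def] at this
    have h2 := le_of_scaled (a := ‖c i‖) (b := 2 * K * K * δ) ht (wt_le_r hr hi) (by positivity)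
      (t_le_one St h) (by linarith)
    simpa using h2
  have hz : ‖c i‖ ≤ 0 := by
    refine le_of_forall_pos_le_add fun η hη => ?_
    have h1 := main (η / (2 * K * K + 1)) (by positivity)
    refine h1.trans ?_
    rw [zero_add, ← mul_div_assoc, div_le_iff₀ (by positivity)]
    nlinarith [mul_nonneg hK0 hK0]
  have hz' := norm_le_zero_iff.1 hz
  rw [hc] at hz'
  have hB : (Bin i e : E) ≠ 0 := Nat.cast_ne_zero.2 (Bin_ne_zero hei)
  have hm : (mfact i : E) ≠ 0 := mfact_ne i
  simpa [hB, hm] using hz'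

lemma Tay_zero (St : Setting S O E) (N : ℕ) (D : (S → ℕ) → O → E) (x y : O) :
    Tay St N D 0 x y = ∑ i ∈ Idx S N, D i x * mpow St y i / (mfact i : E) := by
  refine Finset.sum_congr rfl fun i _ => ?_
  simp [Bin]
  ring

lemma zero_mem_Idx (N : ℕ) : (0 : S → ℕ) ∈ Idx S N := mem_Idx.2 (by simp [wt])

lemma eps_zero (St : Setting S O E) (N : ℕ) (f : O → E) (D : (S → ℕ) → O → E) (x : O) :
    epsTay St N f D x 0 = f x - D 0 x := by
  rw [epsTay, add_zero, Finset.sum_eq_single 0]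
  · simp [mpow, mfact]
  · intro i _ hi
    obtain ⟨s, hs⟩ := Function.ne_iff.1 hi
    have : mpow St 0 i = 0 := by
      refine Finset.prod_eq_zero (Finset.mem_univ s) ?_
      rw [map_zero]; exact zero_pow hs
    simp [this]
  · intro h; exact absurd (zero_mem_Idx N) h

/-- points divisible by all powers of the uniformizer have vanishing remainder -/
lemma eps_eq_zero (St : Setting S O E) (r : ℝ) (hr : 0 ≤ r) (f : O → E) (D : (S → ℕ) → O → E)
    (hf : IsCrWith St r f D) (x y : O) (hy : ∀ n : ℕ, ∃ z, y = St.ϖ ^ n * z) :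
    epsTay St ⌊r⌋₊ f D x y = 0 := by
  rw [← norm_le_zero_iff]
  refine le_of_forall_pos_le_add fun η hη => ?_
  obtain ⟨M, hM⟩ := hf.2 η hη
  obtain ⟨z, rfl⟩ := hy M
  have h1 := q_conv St (hM M le_rfl x z)
  rw [zero_add]
  exact h1.trans (mul_le_of_le_one_right hη.le
    (Real.rpow_le_one (t_pos St M).le (t_le_one St M) hr))

/-- for `N ≥ [r]`, the space `𝓕^N(O, J, (d_σ)_{σ∈S∖J})` is dense in
`C^r(O, J', (d_σ)_{σ∈S∖J'})`. -/
theorem statement16 (St : Setting S O E) (J : Set S) (d : S → ℕ)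
    (r : ℝ) (hr : 0 ≤ r) (N : ℕ) (hN : ⌊r⌋₊ ≤ N)
    (f : O → E) (D : (S → ℕ) → O → E)
    (hf : IsCrWith St r f D)
    (hvan : ∀ s ∉ Jp J d r, D (Pi.single s (d s + 1)) = 0) :
    ∀ ε : ℝ, 0 < ε → ∃ g ∈ FNJ St N J d, ∃ D' : (S → ℕ) → O → E,
      IsCrWith St r (fun z => f z - g z) D' ∧
      CrNorm St r (fun z => f z - g z) D' ≤ ε := by
  intro ε hε
  set R := ⌊r⌋₊ with hRdef
  obtain ⟨K, hK0, hK⟩ := exists_K St R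
  have hq1 := one_lt_q St
  have hq0 : 0 < St.q := zero_lt_one.trans hq1
  -- vanishing of the forbidden derivatives
  have hvan' : ∀ i ∈ Idx S R, (∃ s ∉ J, d s < i s) → ∀ x, D i x = 0 := by
    rintro i hi ⟨s, hsJ, hs⟩ x
    have hsp : s ∉ Jp J d r := by
      rintro (h | h)
      · exact hsJ h
      · have h1 : i s ≤ wt i :=
          Finset.single_le_sum (f := i) (fun _ _ => Nat.zero_le _) (Finset.mem_univ s)
        have h2 := wt_le_r hr hi
        have h3 : (d s : ℝ) + 1 ≤ wt i := by exact_mod_cast (by omega : d s + 1 ≤ wt i)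
        have h4 : r < (d s : ℝ) + 1 := h
        linarith
    refine vanish St r hr f D hf _ (hvan s hsp) i hi ?_ x
    intro s'
    by_cases hs' : s' = s
    · subst hs'; simpa using hs
    · simp [hs']
  have hD0 : ∀ x, D 0 x = f x := by
    intro x
    have := eps_eq_zero St r hr f D hf x 0 (fun n => ⟨0, by simp⟩)
    rw [eps_zero] at this
    exact (sub_eq_zero.1 this).symm
  -- the scale
  set A : ℝ := St.q ^ r + 2 * K * (2 + (Idx S R).card) with hA
  have hApos : 0 < A := by positivity
  set δ := ε / A with hδdef
  have hδ : 0 < δ := by positivity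
  have hδA : δ * A = ε := by rw [hδdef]; field_simp
  obtain ⟨h, hM⟩ := hf.2 δ hδ
  have hb : ∀ n, h ≤ n → ∀ x z, ‖epsTay St R f D x (St.ϖ ^ n * z)‖ ≤ δ * (St.q⁻¹ ^ n) ^ r :=
    fun n hn x z => q_conv St (hM n hn x z)
  -- coset representatives
  let I : Ideal O := Ideal.span {St.ϖ ^ h}
  let ρ : O → O := fun x => Quotient.out (Ideal.Quotient.mk I x)
  have hρ : ∀ x, ∃ u, x = ρ x + St.ϖ ^ h * u := by
    intro x
    have h1 : Ideal.Quotient.mk I x = Ideal.Quotient.mk I (ρ x) :=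
      (Quotient.out_eq (Ideal.Quotient.mk I x)).symm
    rw [Ideal.Quotient.eq, Ideal.mem_span_singleton] at h1
    obtain ⟨u, hu⟩ := h1
    exact ⟨u, by rw [← hu]; ring⟩
  have hρ2 : ∀ x u, ρ (x + St.ϖ ^ h * u) = ρ x := by
    intro x u
    have : Ideal.Quotient.mk I (x + St.ϖ ^ h * u) = Ideal.Quotient.mk I x := by
      rw [Ideal.Quotient.eq, Ideal.mem_span_singleton]
      exact ⟨u, by ring⟩
    simp only [ρ, this]
  let G : (S → ℕ) → O → E := fun j x => Tay St R D j (ρ x) (x - ρ x)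
  have hG : ∀ x u, G 0 (x + St.ϖ ^ h * u) = ∑ j ∈ Idx S R, G j x * mpow St (St.ϖ ^ h * u) j := by
    intro x u
    simp only [G]
    rw [hρ2, ← taylor_shift, Tay_zero]
    refine Finset.sum_congr rfl fun i _ => ?_
    congr 3
    ring
  let D' : (S → ℕ) → O → E := fun j x => (mfact j : E) * (D j x / (mfact j : E) - G j x)
  have hD'div : ∀ j x, D' j x / (mfact j : E) = D j x / (mfact j : E) - G j x :=
    fun j x => mul_div_cancel_left₀ _ (mfact_ne j)
  have hbd : ∀ j ∈ Idx S R, ∀ x,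
      ‖D' j x / (mfact j : E)‖ * (St.q⁻¹ ^ h) ^ wt j ≤ (2 * K * δ) * (St.q⁻¹ ^ h) ^ r := by
    intro j hj x
    obtain ⟨u, hu⟩ := hρ x
    have h1 := rem_bound St R f D hK h _ (hb h le_rfl) (ρ x) u j hj
    have h2 : D' j x / (mfact j : E) = Rem St R D j (ρ x) (St.ϖ ^ h * u) := by
      rw [hD'div, Rem, ← hu]
      simp only [G]
      congr 2
      exact sub_eq_iff_eq_add'.2 hu
    rw [h2]
    linarith
  have hbd1 : ∀ j ∈ Idx S R, ∀ x, ‖D' j x / (mfact j : E)‖ ≤ 2 * K * δ := by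
    intro j hj x
    have := le_of_scaled (t_pos St h) (wt_le_r hr hj) (by positivity) (t_le_one St h) (hbd j hj x)
    simpa using this
  have heps : ∀ x y, epsTay St R (fun z => f z - G 0 z) D' x y
      = (f (x + y) - G 0 (x + y)) - ∑ j ∈ Idx S R, D' j x / (mfact j : E) * mpow St y j := by
    intro x y
    rw [epsTay]
    congr 1
    exact Finset.sum_congr rfl fun j _ => by ring
  have heps2 : ∀ x u, epsTay St R (fun z => f z - G 0 z) D' x (St.ϖ ^ h * u)
      = epsTay St R f D x (St.ϖ ^ h * u) := by
    intro x u
    rw [heps, hG, epsTay]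
    have : ∀ j ∈ Idx S R, D j x * mpow St (St.ϖ ^ h * u) j / (mfact j : E)
      = D' j x / (mfact j : E) * mpow St (St.ϖ ^ h * u) j + G j x * mpow St (St.ϖ ^ h * u) j := by
      intro j _
      rw [hD'div]; ring
    rw [Finset.sum_congr rfl this, Finset.sum_add_distrib]
    ring
  refine ⟨G 0, ?_, D', ⟨?_, ?_⟩, ?_⟩
  · refine ⟨h, fun a => ⟨fun j => if j ∈ Idx S R then G j a else 0, fun y => ?_⟩⟩
    rw [hG]
    have hsub : (Idx S R).filter (fun i => ∀ s ∉ J, i s ≤ d s)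
        ⊆ (Idx S N).filter (fun i => ∀ s ∉ J, i s ≤ d s) := by
      intro i hi
      rw [Finset.mem_filter, mem_Idx] at *
      exact ⟨hi.1.trans hN, hi.2⟩
    rw [← Finset.sum_subset hsub]
    · rw [Finset.sum_filter]
      refine Finset.sum_congr rfl fun j hj => ?_
      by_cases hjs : ∀ s ∉ J, j s ≤ d s
      · simp only [if_pos hjs, if_pos hj]
      · rw [if_neg hjs]
        push Not at hjs
        obtain ⟨s, hsJ, hs⟩ := hjs
        have : G j a = 0 := by
          refine Finset.sum_eq_zero fun i hi => ?_
          by_cases hji : j ≤ i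
          · rw [hvan' i hi ⟨s, hsJ, hs.trans_le (hji s)⟩]; simp
          · simp [Bin_eq_zero hji]
        rw [this, zero_mul]
    · intro i hi hi'
      rw [Finset.mem_filter] at hi hi'
      have hni : i ∉ Idx S R := fun hc => hi' ⟨hc, hi.2⟩
      simp only [if_neg hni, zero_mul]
  · intro j hj
    refine ⟨‖(mfact j : E)‖ * (2 * K * δ), fun x => ?_⟩
    have : D' j x = (mfact j : E) * (D' j x / (mfact j : E)) := by
      rw [mul_div_cancel₀ _ (mfact_ne j)]
    rw [this, norm_mul]
    exact mul_le_mul_of_nonneg_left (hbd1 j hj x) (norm_nonneg _)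
  · intro η hη
    obtain ⟨M, hM'⟩ := hf.2 η hη
    refine ⟨max M h, fun n hn x z => ?_⟩
    have hn1 := (le_max_left _ _).trans hn
    have hn2 := (le_max_right _ _).trans hn
    have : St.ϖ ^ n * z = St.ϖ ^ h * (St.ϖ ^ (n - h) * z) := by
      rw [← mul_assoc, ← pow_add, Nat.add_sub_cancel' hn2]
    have h1 := hM' n hn1 x z
    rw [this] at h1 ⊢
    rw [heps2]
    exact h1
  · have hcard : (0 : ℝ) ≤ (Idx S R).card := Nat.cast_nonneg _
    have hqr : 0 < St.q ^ r := by positivity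
    have hKδ : 0 ≤ K * δ := by positivity
    have hKδc : 0 ≤ K * δ * (Idx S R).card := by positivity
    have hqδ : 0 < δ * St.q ^ r := by positivity
    have hε1 : 2 * K * δ ≤ ε := by rw [← hδA, hA]; nlinarith
    have hε2 : δ * St.q ^ r ≤ ε := by rw [← hδA, hA]; nlinarith
    have hε3 : 2 * K * δ + (Idx S R).card * (2 * K * δ) ≤ ε := by rw [← hδA, hA]; nlinarith
    refine max_le ?_ ?_
    · refine Real.iSup_le (fun i => Real.iSup_le (fun x => ?_) hε.le) hε.le
      exact (hbd1 i.1 i.2 x).trans hε1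
    · refine Real.iSup_le (fun x => Real.iSup_le (fun y => ?_) hε.le) hε.le
      by_cases hy : St.ν y ≤ 0
      · have hy' : ∀ n : ℕ, ∃ z, y = St.ϖ ^ n * z := fun n =>
          (St.mem_ball_iff y n).2 (hy.trans (t_pos St n).le)
        have h0 := eps_eq_zero St r hr f D hf x y hy'
        obtain ⟨u, hu⟩ := hy' h
        have h1 := heps2 x u
        rw [← hu, h0] at h1
        rw [h1, norm_zero, zero_div]
        exact hε.le
      push Not at hy
      have hyr : 0 < St.ν y ^ r := by positivity
      rw [div_le_iff₀ hyr]
      by_cases hyh : ∃ z, y = St.ϖ ^ h * z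
      · have hy1 : St.ν y ≤ 1 := by
          simpa using (St.mem_ball_iff y 0).1 ⟨y, by simp⟩
        obtain ⟨n, hn1, hn2⟩ := exists_nat_pow_near_of_lt_one hy hy1 (inv_pos.2 hq0)
          (inv_lt_one_of_one_lt₀ hq1)
        have hnh : h ≤ n := by
          by_contra hlt
          have h1 := (St.mem_ball_iff y h).1 hyh
          have h2 : St.q⁻¹ ^ h ≤ St.q⁻¹ ^ (n + 1) :=
            pow_le_pow_of_le_one (inv_pos.2 hq0).le (inv_lt_one_of_one_lt₀ hq1).le (by omega)
          linarith
        obtain ⟨w, hw⟩ := (St.mem_ball_iff y n).2 hn2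
        have h3 := hb n hnh x w
        rw [← hw] at h3
        obtain ⟨u, hu⟩ := hyh
        have h4 := heps2 x u
        rw [← hu] at h4
        rw [h4]
        have h5 : (St.q⁻¹ ^ n) ^ r ≤ St.q ^ r * St.ν y ^ r := by
          rw [← Real.mul_rpow hq0.le hy.le]
          refine Real.rpow_le_rpow (t_pos St n).le ?_ hr
          rw [pow_succ, ← div_eq_mul_inv, div_lt_iff₀ hq0] at hn1
          linarith
        calc _ ≤ δ * (St.q⁻¹ ^ n) ^ r := h3
          _ ≤ δ * (St.q ^ r * St.ν y ^ r) := mul_le_mul_of_nonneg_left h5 hδ.le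
          _ = (δ * St.q ^ r) * St.ν y ^ r := by ring
          _ ≤ _ := mul_le_mul_of_nonneg_right hε2 hyr.le
      · have hty : St.q⁻¹ ^ h ≤ St.ν y := by
          rw [St.mem_ball_iff] at hyh
          exact (not_le.1 hyh).le
        have hsc : ∀ j ∈ Idx S R, ∀ x,
            ‖D' j x / (mfact j : E)‖ * St.ν y ^ wt j ≤ (2 * K * δ) * St.ν y ^ r :=
          fun j hj x => le_of_scaled (t_pos St h) (wt_le_r hr hj) (by positivity) hty (hbd j hj x)
        have h0 : ‖f (x + y) - G 0 (x + y)‖ ≤ (2 * K * δ) * St.ν y ^ r := by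
          have := hsc 0 (zero_mem_Idx R) (x + y)
          rw [hD'div, hD0] at this
          simpa [wt, mfact] using this
        rw [heps]
        have h1 : ‖∑ j ∈ Idx S R, D' j x / (mfact j : E) * mpow St y j‖
            ≤ (Idx S R).card * ((2 * K * δ) * St.ν y ^ r) := by
          rw [← nsmul_eq_mul, ← Finset.sum_const]
          refine norm_sum_le_of_le _ fun j hj => ?_
          rw [norm_mul, norm_mpow]
          exact hsc j hj x
        calc _ ≤ _ := norm_sub_le _ _
          _ ≤ _ := add_le_add h0 h1
          _ = (2 * K * δ + (Idx S R).card * (2 * K * δ)) * St.ν y ^ r := by ring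
          _ ≤ _ := mul_le_mul_of_nonneg_right hε3 hyr.le

end CrPaper
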